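/- Let N ≥ 1 and let x_0, …, x_{N-1} be the N distinct real roots of the Hermite polynomial H_N. Define the Gauss–Hermite function weights \hat{ω}_j = √π / (N \widehat{H}_{N-1}(x_j)²) and the Lagrange-type basis functions h_j(x) = (e^{-x²/2}/e^{-x_j²/2}) ∏_{i≠j} (x − x_i)/(x_j − x_i). Then for every j with 0 ≤ j ≤ N−1 and every real x, h_j(x) = Σ_{k=0}^{N-1} (1/√π) \widehat{H}_k(x_j) \hat{ω}_j \widehat{H}_k(x). -/

import Mathlib

/-!
The right-hand side is a Gaussian factor times the Christoffel–Darboux kernel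
`K(a, y) = ∑ k < N, H_k(a) H_k(y) / (2^k k!)` at a root `a = x_j` of `H_N`. The
Christoffel–Darboux formula gives `(y - a) K(a, y) = c H_N(y)` for a constant `c`, so the
polynomial `K(a, ·)`, of degree less than `N`, vanishes at all the other roots and hence equals
`K(a, a)` times the Lagrange basis polynomial at `x_j`. Differentiating the formula at `a` and
using `H_N' = 2 N H_{N-1}` gives `K(a, a) = N H_{N-1}(a)² / (2^(N-1) (N-1)!)`, which is the
reciprocal of the weight up to `√π` and a Gaussian factor. It is nonzero because the `k = 0` term of the
positively weighted sum of squares `K(a, a)` is `1`.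
-/


open Real Polynomial Finset

noncomputable section

/-- Physicists' Hermite polynomials as polynomials over `ℝ`. -/
def hermitePoly : ℕ → Polynomial ℝ
  | 0 => 1
  | 1 => C 2 * X
  | (n + 2) => C 2 * X * hermitePoly (n + 1) - C (2 * ((n : ℝ) + 1)) * hermitePoly n

/-- Normalized Hermite functions `Ĥₙ(x) = (2ⁿ n!)^{-1/2} e^{-x²/2} Hₙ(x)`. -/
def normHermite (n : ℕ) (x : ℝ) : ℝ :=
  Real.exp (-x ^ 2 / 2) * (hermitePoly n).eval x / Real.sqrt (2 ^ n * n.factorial)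

lemma hermitePoly_add_two (n : ℕ) : hermitePoly (n + 2) =
    C 2 * X * hermitePoly (n + 1) - C (2 * ((n : ℝ) + 1)) * hermitePoly n := rfl

lemma natDegree_hermitePoly_le : ∀ n : ℕ, (hermitePoly n).natDegree ≤ n
  | 0 => by simp [hermitePoly]
  | 1 => by
    rw [hermitePoly]
    compute_degree
  | n + 2 => by
    have h1 := natDegree_hermitePoly_le (n + 1)
    have h0 := natDegree_hermitePoly_le n
    rw [hermitePoly_add_two]
    refine (natDegree_sub_le _ _).trans (max_le ?_ ?_)
    · have h2 : (C (2 : ℝ) * X).natDegree ≤ 1 := by compute_degree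
      exact natDegree_mul_le.trans (by omega)
    · exact (natDegree_C_mul_le _ _).trans (by omega)

lemma derivative_hermitePoly_succ : ∀ n : ℕ,
    derivative (hermitePoly (n + 1)) = C (2 * ((n : ℝ) + 1)) * hermitePoly n
  | 0 => by simp [hermitePoly]
  | 1 => by
    simp [hermitePoly]
    ring
  | n + 2 => by
    rw [hermitePoly_add_two (n + 1), derivative_sub, derivative_mul, derivative_C_mul,
      derivative_C_mul,
      derivative_hermitePoly_succ (n + 1), derivative_hermitePoly_succ n, hermitePoly_add_two n]
    simp only [derivative_X, map_mul, map_add, map_natCast, map_one,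
      Nat.cast_add, Nat.cast_one]
    ring

/-- The Christoffel–Darboux kernel `∑ k < N, H_k(a) H_k / (2^k k!)`, as a polynomial in its second
variable with the first one fixed at `a`. -/
def hermiteKernel (N : ℕ) (a : ℝ) : Polynomial ℝ :=
  ∑ k ∈ Finset.range N, C ((hermitePoly k).eval a / (2 ^ k * k.factorial)) * hermitePoly k

lemma eval_hermiteKernel (N : ℕ) (a y : ℝ) : (hermiteKernel N a).eval y =
    ∑ k ∈ Finset.range N,
      (hermitePoly k).eval a / (2 ^ k * k.factorial) * (hermitePoly k).eval y := by
  simp [hermiteKernel, eval_finsetSum]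

lemma degree_hermiteKernel_lt (N : ℕ) (a : ℝ) : (hermiteKernel N a).degree < N := by
  rw [← mem_degreeLT]
  refine Submodule.sum_mem _ fun k hk => mem_degreeLT.2 ?_
  refine degree_le_natDegree.trans_lt ?_
  exact_mod_cast ((natDegree_C_mul_le _ _).trans (natDegree_hermitePoly_le k)).trans_lt
    (Finset.mem_range.1 hk)

/-- The Christoffel–Darboux formula for Hermite polynomials. -/
lemma sub_mul_eval_hermiteKernel (n : ℕ) (a y : ℝ) :
    (y - a) * (hermiteKernel (n + 1) a).eval y =
      ((hermitePoly n).eval a * (hermitePoly (n + 1)).eval y -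
        (hermitePoly (n + 1)).eval a * (hermitePoly n).eval y) /
          (2 ^ (n + 1) * n.factorial) := by
  induction n with
  | zero =>
    simp [eval_hermiteKernel, hermitePoly]
    ring
  | succ n ih =>
    rw [eval_hermiteKernel, Finset.sum_range_succ, ← eval_hermiteKernel, mul_add, ih,
      hermitePoly_add_two]
    have hf : (n.factorial : ℝ) ≠ 0 := by positivity
    simp only [eval_sub, eval_mul, eval_C, eval_X, Nat.factorial_succ, Nat.cast_mul, Nat.cast_add,
      Nat.cast_one]
    field_simp
    ring

lemma X_sub_C_mul_hermiteKernel {n : ℕ} {a : ℝ} (ha : (hermitePoly (n + 1)).eval a = 0) :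
    (X - C a) * hermiteKernel (n + 1) a =
      C ((hermitePoly n).eval a / (2 ^ (n + 1) * n.factorial)) * hermitePoly (n + 1) := by
  refine Polynomial.funext fun y => ?_
  have h := sub_mul_eval_hermiteKernel n a y
  rw [ha] at h
  simp only [eval_mul, eval_sub, eval_X, eval_C, h]
  ring

/-- The diagonal value of the kernel at a root, obtained by differentiating the
Christoffel–Darboux formula there. -/
lemma eval_hermiteKernel_self {n : ℕ} {a : ℝ} (ha : (hermitePoly (n + 1)).eval a = 0) :
    (hermiteKernel (n + 1) a).eval a =
      (n + 1) * (hermitePoly n).eval a ^ 2 / (2 ^ n * n.factorial) := by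
  have h := congrArg (fun p => (derivative p).eval a) (X_sub_C_mul_hermiteKernel ha)
  simp only [derivative_mul, derivative_sub, derivative_X, derivative_C, sub_zero, one_mul,
    eval_add, eval_mul, eval_sub, eval_X, eval_C, sub_self, zero_mul, add_zero,
    derivative_hermitePoly_succ, zero_add] at h
  rw [h]
  field_simp
  ring

lemma eval_hermiteKernel_self_pos (n : ℕ) (a : ℝ) : 0 < (hermiteKernel (n + 1) a).eval a := by
  rw [eval_hermiteKernel, Finset.sum_range_succ']
  refine add_pos_of_nonneg_of_pos (Finset.sum_nonneg fun k _ => ?_) (by simp [hermitePoly])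
  rw [div_mul_eq_mul_div]
  exact div_nonneg (mul_self_nonneg _) (by positivity)

lemma eval_hermiteKernel_eq_prod {n : ℕ} (x : Fin (n + 1) → ℝ) (hinj : Function.Injective x)
    (hroot : ∀ j, (hermitePoly (n + 1)).eval (x j) = 0) (j : Fin (n + 1)) (y : ℝ) :
    (hermiteKernel (n + 1) (x j)).eval y = (hermiteKernel (n + 1) (x j)).eval (x j) *
      ∏ i ∈ Finset.univ.erase j, (y - x i) / (x j - x i) := by
  have hdeg : (hermiteKernel (n + 1) (x j)).degree < #(Finset.univ : Finset (Fin (n + 1))) := by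
    simpa using degree_hermiteKernel_lt (n + 1) (x j)
  have hvan : ∀ i, i ≠ j → (hermiteKernel (n + 1) (x j)).eval (x i) = 0 := fun i hi => by
    have h := congrArg (Polynomial.eval (x i)) (X_sub_C_mul_hermiteKernel (hroot j))
    simp only [eval_mul, eval_sub, eval_X, eval_C, hroot i, mul_zero] at h
    exact (mul_eq_zero.1 h).resolve_left (sub_ne_zero.2 (hinj.ne hi))
  have h := congrArg (Polynomial.eval y) (Lagrange.eq_interpolate (v := x) hinj.injOn hdeg)
  rw [h, Lagrange.interpolate_apply, eval_finsetSum, Finset.sum_eq_single j]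
  · simp only [eval_mul, eval_C, Lagrange.basis, Lagrange.basisDivisor, eval_prod, eval_sub, eval_X]
    congr 1
    exact Finset.prod_congr rfl fun i _ => by rw [div_eq_inv_mul]
  · intro i _ hi
    simp [hvan i hi]
  · simp

lemma normHermite_mul_normHermite (k : ℕ) (a y : ℝ) : normHermite k a * normHermite k y =
    Real.exp (-a ^ 2 / 2) * Real.exp (-y ^ 2 / 2) *
      ((hermitePoly k).eval a / (2 ^ k * k.factorial) * (hermitePoly k).eval y) := by
  have hs : Real.sqrt (2 ^ k * k.factorial) * Real.sqrt (2 ^ k * k.factorial) =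
      2 ^ k * k.factorial := Real.mul_self_sqrt (by positivity)
  rw [normHermite, normHermite, div_mul_div_comm, hs]
  ring

theorem lagrange_basis_expansion (N : ℕ) (hN : 1 ≤ N)
    (x : Fin N → ℝ) (hinj : Function.Injective x)
    (hroot : ∀ j : Fin N, (hermitePoly N).eval (x j) = 0)
    (ω : Fin N → ℝ)
    (hω : ∀ j : Fin N, ω j = Real.sqrt Real.pi / (N * (normHermite (N - 1) (x j)) ^ 2))
    (h : Fin N → ℝ → ℝ)
    (hh : ∀ (j : Fin N) (y : ℝ),
      h j y = Real.exp (-y ^ 2 / 2) / Real.exp (-(x j) ^ 2 / 2) *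
        ∏ i ∈ Finset.univ.erase j, (y - x i) / (x j - x i)) :
    ∀ (j : Fin N) (y : ℝ),
      h j y = ∑ k ∈ Finset.range N,
        (1 / Real.sqrt Real.pi) * normHermite k (x j) * ω j * normHermite k y := by
  intro j y
  obtain ⟨n, rfl⟩ : ∃ n, N = n + 1 := ⟨N - 1, by omega⟩
  have hK := eval_hermiteKernel_self (hroot j)
  have hpos := eval_hermiteKernel_self_pos n (x j)
  have hsum : ∑ k ∈ Finset.range (n + 1),
      (1 / Real.sqrt Real.pi) * normHermite k (x j) * ω j * normHermite k y =
      1 / Real.sqrt Real.pi * ω j * (Real.exp (-(x j) ^ 2 / 2) * Real.exp (-y ^ 2 / 2)) *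
        (hermiteKernel (n + 1) (x j)).eval y := by
    rw [eval_hermiteKernel, Finset.mul_sum]
    refine Finset.sum_congr rfl fun k _ => ?_
    linear_combination (1 / Real.sqrt Real.pi * ω j) * normHermite_mul_normHermite k (x j) y
  have hωj : ω j = Real.sqrt Real.pi /
      (Real.exp (-(x j) ^ 2 / 2) ^ 2 * (hermiteKernel (n + 1) (x j)).eval (x j)) := by
    rw [hω, hK, Nat.add_sub_cancel, sq (normHermite n (x j)), normHermite_mul_normHermite]
    push_cast
    congr 1
    ring
  rw [hsum, hωj, hh, eval_hermiteKernel_eq_prod x hinj hroot j y]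
  have hπ : Real.sqrt Real.pi ≠ 0 := (Real.sqrt_pos.2 Real.pi_pos).ne'
  have he := (Real.exp_pos (-(x j) ^ 2 / 2)).ne'
  have hne := hpos.ne'
  -- With the exponentials opaque, what is left is an identity of rational functions.
  generalize Real.exp (-(x j) ^ 2 / 2) = e at *
  generalize Real.exp (-y ^ 2 / 2) = e' at *
  field_simp
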